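/- arXiv:1611.02543 — 3 statements merged into one kernel-verified Lean document; each statement's English description precedes it below -/
import Mathlib

section
/- Let S be a finite set of at least three points in ℝ² such that no three pairwise distinct points of S are collinear, and let x₀ ∈ S be an extreme point of the convex hull of S. Then there exists x₁ ∈ S with x₁ ≠ x₀ such that all points of S other than x₀ and x₁ lie strictly on one side of the line through x₀ and x₁; that is, S \ {x₀, x₁} is contained in one of the two open half-planes determined by the line through x₀ and x₁. -/
open scoped InnerProductSpace

noncomputable section

/-- The Euclidean plane. -/
abbrev Plane : Type := EuclideanSpace ℝ (Fin 2)

/-- The line through `a` and `b`: the affine span of `{a, b}`. -/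
def line (a b : Plane) : AffineSubspace ℝ Plane := affineSpan ℝ {a, b}

/-- Let `S` be a finite set of at least three points of the plane, no three pairwise
distinct points of which are collinear, and let `x₀ ∈ S` be an extreme point of the convex
hull of `S`.  Then there is `x₁ ∈ S`, `x₁ ≠ x₀`, such that all points of `S` other than
`x₀, x₁` lie in one of the two open half-planes determined by the line through `x₀` and
`x₁`; the half-plane is described via a unit normal `n` to the line. -/
theorem exists_supporting_edge
    (S : Finset Plane) (hScard : 3 ≤ S.card)
    (hgen : ∀ x ∈ S, ∀ y ∈ S, ∀ z ∈ S, x ≠ y → x ≠ z → y ≠ z → x ∉ line y z)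
    (x₀ : Plane) (hx₀S : x₀ ∈ S)
    (hx₀ext : x₀ ∈ Set.extremePoints ℝ (convexHull ℝ (S : Set Plane))) :
    ∃ x₁ ∈ S, x₁ ≠ x₀ ∧
      ∃ n : Plane, ‖n‖ = 1 ∧ (∀ v ∈ (line x₀ x₁).direction, ⟪n, v⟫_ℝ = 0) ∧
        ∀ x ∈ S, x ≠ x₀ → x ≠ x₁ → 0 < ⟪n, x - x₀⟫_ℝ := by
  -- `x₀` is not in the hull of the other points; separate it strictly.
  have hnot : x₀ ∉ convexHull ℝ ((S : Set Plane) \ {x₀}) := by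
    have h := ((convex_convexHull ℝ (S : Set Plane)).mem_extremePoints_iff_mem_sdiff_convexHull_sdiff).1 hx₀ext
    intro h'
    exact h.2 (convexHull_mono (Set.sdiff_subset_sdiff_left (subset_convexHull ℝ _)) h')
  have hfin : ((S : Set Plane) \ {x₀}).Finite := S.finite_toSet.subset Set.sdiff_subset
  obtain ⟨f, c, hf0, hf1⟩ := geometric_hahn_banach_point_closed (convex_convexHull ℝ _)
    (hfin.isCompact_convexHull ℝ).isClosed hnot
  obtain ⟨a, b, hf⟩ : ∃ a b : ℝ, ∀ v : Plane, f v = a * v 0 + b * v 1 := by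
    refine ⟨f (EuclideanSpace.single 0 1), f (EuclideanSpace.single 1 1), fun v => ?_⟩
    have hv : v = v 0 • EuclideanSpace.single (0 : Fin 2) (1 : ℝ)
        + v 1 • EuclideanSpace.single (1 : Fin 2) (1 : ℝ) := by
      ext i
      fin_cases i <;> simp
    conv_lhs => rw [hv]
    rw [map_add, map_smul, map_smul, smul_eq_mul, smul_eq_mul]
    ring
  have hpos : ∀ x ∈ S, x ≠ x₀ → 0 < a * (x 0 - x₀ 0) + b * (x 1 - x₀ 1) := by
    intro x hx hne
    have h1 := hf1 x (subset_convexHull ℝ _ ⟨hx, hne⟩)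
    rw [hf] at h1 hf0
    linarith
  have hne : (S.erase x₀).Nonempty := by
    rw [← Finset.card_pos, Finset.card_erase_of_mem hx₀S]
    omega
  obtain ⟨x₁, hx₁, hmin⟩ := Finset.exists_min_image (S.erase x₀)
    (fun x => (a * (x 1 - x₀ 1) - b * (x 0 - x₀ 0)) / (a * (x 0 - x₀ 0) + b * (x 1 - x₀ 1))) hne
  obtain ⟨hx₁ne, hx₁S⟩ := Finset.mem_erase.1 hx₁
  have hw := hpos x₁ hx₁S hx₁ne
  have hcross : ∀ x ∈ S, x ≠ x₀ → x ≠ x₁ →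
      0 < (x₁ 0 - x₀ 0) * (x 1 - x₀ 1) - (x₁ 1 - x₀ 1) * (x 0 - x₀ 0) := by
    intro x hx h0 h1
    have hu := hpos x hx h0
    have hm := hmin x (Finset.mem_erase.2 ⟨h0, hx⟩)
    simp only at hm
    rw [div_le_div_iff₀ hw hu] at hm
    have hab : 0 < a ^ 2 + b ^ 2 := by
      by_contra hcon
      have ha : a = 0 := by nlinarith [sq_nonneg a, sq_nonneg b]
      have hb : b = 0 := by nlinarith [sq_nonneg a, sq_nonneg b]
      simp [ha, hb] at hu
    have hge : 0 ≤ (x₁ 0 - x₀ 0) * (x 1 - x₀ 1) - (x₁ 1 - x₀ 1) * (x 0 - x₀ 0) := by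
      refine nonneg_of_mul_nonneg_right ?_ hab
      linarith
    refine lt_of_le_of_ne hge fun heq => ?_
    refine hgen x hx x₀ hx₀S x₁ hx₁S h0 h1 hx₁ne.symm ?_
    have hx : x = AffineMap.lineMap x₀ x₁ ((a * (x 0 - x₀ 0) + b * (x 1 - x₀ 1)) /
        (a * (x₁ 0 - x₀ 0) + b * (x₁ 1 - x₀ 1))) := by
      rw [AffineMap.lineMap_apply]
      ext i
      fin_cases i
      · simp
        rw [← sub_eq_iff_eq_add, div_mul_eq_mul_div, eq_div_iff hw.ne']
        linear_combination b * heq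
      · simp
        rw [← sub_eq_iff_eq_add, div_mul_eq_mul_div, eq_div_iff hw.ne']
        linear_combination -a * heq
    rw [hx]
    exact AffineMap.lineMap_mem_affineSpan_pair _ _ _
  set m : Plane := !₂[-(x₁ 1 - x₀ 1), x₁ 0 - x₀ 0] with hm
  have hinner : ∀ v : Plane, ⟪m, v⟫_ℝ = (x₁ 0 - x₀ 0) * v 1 - (x₁ 1 - x₀ 1) * v 0 := by
    intro v
    simp [hm, PiLp.inner_apply, Fin.sum_univ_two]
    ring
  have hm0 : m ≠ 0 := by
    intro h
    have e0 : m 0 = 0 := by rw [h]; rfl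
    have e1 : m 1 = 0 := by rw [h]; rfl
    simp [hm] at e0 e1
    have e0' : x₁ 1 - x₀ 1 = 0 := by linarith
    rw [e0', e1] at hw
    simp at hw
  have hnorm : 0 < ‖m‖ := norm_pos_iff.2 hm0
  refine ⟨x₁, hx₁S, hx₁ne, ‖m‖⁻¹ • m, ?_, ?_, ?_⟩
  · rw [norm_smul, norm_inv, norm_norm, inv_mul_cancel₀ hnorm.ne']
  · intro v hv
    rw [line, direction_affineSpan, mem_vectorSpan_pair] at hv
    obtain ⟨r, rfl⟩ := hv
    rw [real_inner_smul_left, hinner]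
    simp
    right
    ring
  · intro x hx h0 h1
    rw [real_inner_smul_left, hinner]
    exact mul_pos (inv_pos.2 hnorm) (by simpa using hcross x hx h0 h1)
end
end

section
/- Let a be a real number with a ≠ 0 and |a| < 2, and let S = {(-1,-1), (-1,1), (1,1), (1,-1), (1+a, 0), (-1+a, 0)} ⊆ ℝ². Then at least one of the two points (1+a, 0) and (-1+a, 0) is an extreme point of the convex hull of S; specifically, if a > 0 then (1+a,0) is an extreme point of the convex hull of S, and if a < 0 then (-1+a,0) is an extreme point of the convex hull of S. -/
noncomputable section

/-- The point of the plane with coordinates `(x, y)`. -/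
def pt (x y : ℝ) : Plane := (WithLp.equiv 2 (Fin 2 → ℝ)).symm ![x, y]

lemma pt_zero (x y : ℝ) : (pt x y) 0 = x := by simp [pt]

lemma pt_one (x y : ℝ) : (pt x y) 1 = y := by simp [pt]

/-- A linear inequality valid on `S` is valid on the convex hull of `S`. -/
lemma hull_le (S : Set Plane) (u v c : ℝ) (h : ∀ p ∈ S, u * p 0 + v * p 1 ≤ c) :
    ∀ p ∈ convexHull ℝ S, u * p 0 + v * p 1 ≤ c := by
  have hc : Convex ℝ {p : Plane | u * p 0 + v * p 1 ≤ c} := by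
    intro p hp q hq s t hs ht hst
    simp only [Set.mem_setOf_eq, PiLp.add_apply, PiLp.smul_apply, smul_eq_mul] at *
    have h1 := mul_le_mul_of_nonneg_left hp hs
    have h2 := mul_le_mul_of_nonneg_left hq ht
    have h3 : s * c + t * c = c := by rw [← add_mul, hst, one_mul]
    linarith
  exact fun p hp => convexHull_min (fun p hp => h p hp) hc hp

/-- A point at which two independent valid linear inequalities are tight is extreme. -/
lemma extreme_of_two (S : Set Plane) (e a c x0 : ℝ) (he : e ≠ 0) (ha : a ≠ 0)
    (hmem : pt x0 0 ∈ S) (hc : e * x0 = c)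
    (h1 : ∀ p ∈ S, e * p 0 + a * p 1 ≤ c) (h2 : ∀ p ∈ S, e * p 0 + (-a) * p 1 ≤ c) :
    pt x0 0 ∈ Set.extremePoints ℝ (convexHull ℝ S) := by
  rw [mem_extremePoints_iff_left]
  refine ⟨subset_convexHull ℝ S hmem, ?_⟩
  rintro p hp q hq ⟨s, t, hs, ht, hst, heq⟩
  have e0 : s * p 0 + t * q 0 = x0 := by
    have := congrArg (fun z : Plane => z 0) heq
    simpa [pt_zero] using this
  have e1 : s * p 1 + t * q 1 = 0 := by
    have := congrArg (fun z : Plane => z 1) heq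
    simpa [pt_one] using this
  have key : ∀ w : ℝ, (∀ z ∈ convexHull ℝ S, e * z 0 + w * z 1 ≤ c) →
      e * p 0 + w * p 1 = c := by
    intro w hw
    apply le_antisymm (hw p hp)
    by_contra hlt
    push Not at hlt
    have k1 := mul_lt_mul_of_pos_left hlt hs
    have k2 := mul_le_mul_of_nonneg_left (hw q hq) ht.le
    have k3 : s * c + t * c = c := by rw [← add_mul, hst, one_mul]
    have k4 : s * (e * p 0 + w * p 1) + t * (e * q 0 + w * q 1) = c := by
      rw [← hc, ← e0]
      linear_combination w * e1
    linarith
  have t1 := key a (hull_le S e a c h1)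
  have t2 := key (-a) (hull_le S e (-a) c h2)
  have p1 : p 1 = 0 := by
    have : a * p 1 = 0 := by linarith
    exact (mul_eq_zero.mp this).resolve_left ha
  have p0 : p 0 = x0 := by
    apply mul_left_cancel₀ he
    rw [p1] at t1
    linarith
  ext i
  fin_cases i
  · simpa [pt_zero] using p0
  · simpa [pt_one] using p1

/-- For `a ≠ 0` with `|a| < 2` and
`S = {(-1,-1), (-1,1), (1,1), (1,-1), (1+a,0), (-1+a,0)}`, at least one of the two points
`(1+a,0)` and `(-1+a,0)` is an extreme point of the convex hull of `S`; specifically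
`(1+a,0)` is extreme if `a > 0` and `(-1+a,0)` is extreme if `a < 0`. -/
theorem one_shifted_point_extreme (a : ℝ) (ha : a ≠ 0) (ha2 : |a| < 2) (S : Set Plane)
    (hS : S = {pt (-1) (-1), pt (-1) 1, pt 1 1, pt 1 (-1), pt (1 + a) 0, pt (-1 + a) 0}) :
    (pt (1 + a) 0 ∈ Set.extremePoints ℝ (convexHull ℝ S) ∨
      pt (-1 + a) 0 ∈ Set.extremePoints ℝ (convexHull ℝ S)) ∧
    (0 < a → pt (1 + a) 0 ∈ Set.extremePoints ℝ (convexHull ℝ S)) ∧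
    (a < 0 → pt (-1 + a) 0 ∈ Set.extremePoints ℝ (convexHull ℝ S)) := by
  have hpos : 0 < a → pt (1 + a) 0 ∈ Set.extremePoints ℝ (convexHull ℝ S) := by
    intro h
    apply extreme_of_two S 1 a (1 + a) (1 + a) one_ne_zero ha (by simp [hS]) (by ring)
    all_goals
      subst hS
      rintro p (rfl | rfl | rfl | rfl | rfl | rfl) <;> simp only [pt_zero, pt_one] <;> linarith
  have hneg : a < 0 → pt (-1 + a) 0 ∈ Set.extremePoints ℝ (convexHull ℝ S) := by
    intro h
    apply extreme_of_two S (-1) a (1 - a) (-1 + a) (by norm_num) ha (by simp [hS]) (by ring)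
    all_goals
      subst hS
      rintro p (rfl | rfl | rfl | rfl | rfl | rfl) <;> simp only [pt_zero, pt_one] <;> linarith
  refine ⟨?_, hpos, hneg⟩
  rcases lt_or_gt_of_ne ha with h | h
  · exact Or.inr (hneg h)
  · exact Or.inl (hpos h)
end
end

section
/- Let S be a finite set of at least three points in ℝ² such that no three pairwise distinct points of S are collinear and such that the origin lies in the interior of the convex hull of S. For distinct points a, b ∈ S with the origin not on the line L_{a,b} through a and b, let H_{a,b} denote the closed half-plane bounded by L_{a,b} that contains the origin. Then the convex hull of S equals the intersection of the half-planes H_{a,b} taken over all pairs of distinct points a, b ∈ S with S ⊆ H_{a,b}. -/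
open scoped InnerProductSpace

noncomputable section

/-- Rotation of a vector by a quarter turn, giving a normal to the line through `a` and `b`
when applied to `b - a`. -/
def rot (v : Plane) : Plane := pt (-(v 1)) (v 0)

/-- `Hside a b` is the closed half-plane bounded by the line through `a` and `b` that
contains the origin (meaningful when `a ≠ b` and the origin is not on the line): the set of
points whose signed distance from the line has the same sign as that of the origin, or is
zero. -/
def Hside (a b : Plane) : Set Plane :=
  {x : Plane | 0 ≤ ⟪rot (b - a), x - a⟫_ℝ * ⟪rot (b - a), (0 : Plane) - a⟫_ℝ}

/-- The inner product in coordinates. -/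
lemma inner_coord (x y : Plane) : ⟪x, y⟫_ℝ = x 0 * y 0 + x 1 * y 1 := by
  rw [PiLp.inner_apply, Fin.sum_univ_two]
  simp [mul_comm]

lemma rot_zero (v : Plane) : rot v 0 = -(v 1) := by simp [rot, pt]

lemma rot_one (v : Plane) : rot v 1 = v 0 := by simp [rot, pt]

/-- If `f` takes the value `1` at the distinct points `a`, `b`, then `Hside a b` is `f ≤ 1`. -/
lemma mem_Hside_iff {a b f : Plane} (hab : a ≠ b) (ha : ⟪f, a⟫_ℝ = 1) (hb : ⟪f, b⟫_ℝ = 1)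
    (x : Plane) : x ∈ Hside a b ↔ ⟪f, x⟫_ℝ ≤ 1 := by
  have hne : 0 < (b 0 - a 0) ^ 2 + (b 1 - a 1) ^ 2 := by
    by_contra hcon
    apply hab
    have h0 : b 0 - a 0 = 0 := by nlinarith [sq_nonneg (b 0 - a 0), sq_nonneg (b 1 - a 1)]
    have h1 : b 1 - a 1 = 0 := by nlinarith [sq_nonneg (b 0 - a 0), sq_nonneg (b 1 - a 1)]
    ext i
    fin_cases i
    · simpa using (sub_eq_zero.mp h0).symm
    · simpa using (sub_eq_zero.mp h1).symm
  simp only [Hside, Set.mem_ofPred_eq, inner_coord, rot_zero, rot_one, PiLp.sub_apply,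
    PiLp.zero_apply] at *
  obtain ⟨N, hN⟩ : ∃ N, N = (b 0 - a 0) ^ 2 + (b 1 - a 1) ^ 2 := ⟨_, rfl⟩
  obtain ⟨K, hK⟩ : ∃ K, K = f 0 * (-(b 1 - a 1)) + f 1 * (b 0 - a 0) := ⟨_, rfl⟩
  have hu : f 0 * (b 0 - a 0) + f 1 * (b 1 - a 1) = 0 := by linarith
  have key : ∀ w0 w1 : ℝ, N * (f 0 * w0 + f 1 * w1)
      = K * (-(b 1 - a 1) * w0 + (b 0 - a 0) * w1) := by
    intro w0 w1
    rw [hN, hK]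
    linear_combination ((b 0 - a 0) * w0 + (b 1 - a 1) * w1) * hu
  rw [← hN] at hne
  have k1 := key (x 0 - a 0) (x 1 - a 1)
  have k2 := key (0 - a 0) (0 - a 1)
  have e2 : f 0 * (0 - a 0) + f 1 * (0 - a 1) = -1 := by linarith
  have e1 : f 0 * (x 0 - a 0) + f 1 * (x 1 - a 1) = f 0 * x 0 + f 1 * x 1 - 1 := by linarith
  rw [e1] at k1
  rw [e2] at k2
  have hK0 : K ≠ 0 := by
    rintro rfl
    linarith
  set A := -(b 1 - a 1) * (x 0 - a 0) + (b 0 - a 0) * (x 1 - a 1)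
  set B := -(b 1 - a 1) * (0 - a 0) + (b 0 - a 0) * (0 - a 1)
  set F := f 0 * x 0 + f 1 * x 1
  have hprod : K ^ 2 * (A * B) = N ^ 2 * (1 - F) := by
    calc K ^ 2 * (A * B) = (K * A) * (K * B) := by ring
      _ = N ^ 2 * (1 - F) := by rw [← k1, ← k2]; ring
  have hK2 : 0 < K ^ 2 := by positivity
  have hN2 : 0 < N ^ 2 := by positivity
  constructor
  · intro h
    have : 0 ≤ N ^ 2 * (1 - F) := by rw [← hprod]; positivity
    linarith [nonneg_of_mul_nonneg_right this hN2]
  · intro h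
    have : 0 ≤ K ^ 2 * (A * B) := by
      rw [hprod]
      exact mul_nonneg hN2.le (by linarith)
    exact nonneg_of_mul_nonneg_right this hK2

/-- If `f` takes the value `1` at `a`, `b`, the origin is not on the line through them. -/
lemma zero_notMem_line {a b f : Plane} (ha : ⟪f, a⟫_ℝ = 1) (hb : ⟪f, b⟫_ℝ = 1) :
    (0 : Plane) ∉ line a b := by
  intro h
  rw [line, mem_affineSpan_pair_iff_exists_lineMap_eq] at h
  obtain ⟨r, hr⟩ := h
  have := congrArg (fun z => ⟪f, z⟫_ℝ) hr
  simp only [AffineMap.lineMap_apply, vsub_eq_sub, vadd_eq_add, inner_add_right,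
    inner_smul_right, inner_sub_right, ha, hb, inner_zero_right] at this
  norm_num at this

lemma convex_Hside (a b : Plane) : Convex ℝ (Hside a b) := by
  intro x hx y hy s t hs ht hst
  simp only [Hside, Set.mem_ofPred_eq] at *
  have e : s • x + t • y - a = s • (x - a) + t • (y - a) := by
    have : a = (s + t) • a := by rw [hst, one_smul]
    rw [add_smul] at this
    rw [smul_sub, smul_sub]
    nth_rewrite 1 [this]
    abel
  rw [e, inner_add_right, inner_smul_right, inner_smul_right, add_mul, mul_assoc, mul_assoc]
  positivity

/-- The polar of `S`. -/
def polarSet (S : Finset Plane) : Set Plane := {f | ∀ s ∈ S, ⟪f, s⟫_ℝ ≤ 1}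

lemma convex_polarSet (S : Finset Plane) : Convex ℝ (polarSet S) := by
  intro x hx y hy s t hs ht hst z hz
  rw [inner_add_left, real_inner_smul_left, real_inner_smul_left]
  nlinarith [mul_le_mul_of_nonneg_left (hx z hz) hs, mul_le_mul_of_nonneg_left (hy z hz) ht]

lemma polarSet_hull {S : Finset Plane} {f : Plane} (hf : f ∈ polarSet S) {x : Plane}
    (hx : x ∈ convexHull ℝ (S : Set Plane)) : ⟪f, x⟫_ℝ ≤ 1 := by
  have hc : Convex ℝ {x : Plane | ⟪f, x⟫_ℝ ≤ 1} :=
    convex_halfSpace_le (innerSL ℝ f).isBoundedLinearMap.toIsLinearMap 1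
  exact convexHull_min (fun s hs => hf s hs) hc hx

lemma isCompact_polarSet {S : Finset Plane}
    (h0 : (0 : Plane) ∈ interior (convexHull ℝ (S : Set Plane))) :
    IsCompact (polarSet S) := by
  apply Metric.isCompact_of_isClosed_isBounded
  · have : polarSet S = ⋂ s ∈ S, {f : Plane | ⟪f, s⟫_ℝ ≤ 1} := by
      ext f; simp [polarSet]
    rw [this]
    exact isClosed_biInter fun s _ => isClosed_le (by fun_prop) continuous_const
  · obtain ⟨r, hr, hball⟩ := Metric.mem_nhds_iff.mp (mem_interior_iff_mem_nhds.mp h0)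
    refine (Metric.isBounded_closedBall (x := (0 : Plane)) (r := 2 / r)).subset ?_
    intro f hf
    rw [mem_closedBall_zero_iff]
    by_cases hf0 : f = 0
    · rw [hf0, norm_zero]; positivity
    have hn : 0 < ‖f‖ := norm_pos_iff.mpr hf0
    have hx : (r / 2 / ‖f‖) • f ∈ Metric.ball (0 : Plane) r := by
      rw [mem_ball_zero_iff, norm_smul, Real.norm_of_nonneg (by positivity),
        div_mul_cancel₀ _ hn.ne']
      linarith
    have h1 := polarSet_hull hf (hball hx)
    rw [inner_smul_right, real_inner_self_eq_norm_sq] at h1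
    have h2 : r / 2 / ‖f‖ * ‖f‖ ^ 2 = r / 2 * ‖f‖ := by field_simp
    rw [h2] at h1
    rw [le_div_iff₀ hr]
    linarith

/-- An extreme point of the polar is tight at two distinct points of `S`. -/
lemma exists_tight_pair {S : Finset Plane} {f : Plane}
    (hf : f ∈ (polarSet S).extremePoints ℝ) :
    ∃ a ∈ S, ∃ b ∈ S, a ≠ b ∧ ⟪f, a⟫_ℝ = 1 ∧ ⟪f, b⟫_ℝ = 1 := by
  by_contra hcon
  push Not at hcon
  obtain ⟨hfS, hext⟩ := hf
  -- a nonzero direction orthogonal to every tight point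
  obtain ⟨v, hv0, hv⟩ : ∃ v : Plane, v ≠ 0 ∧ ∀ s ∈ S, ⟪f, s⟫_ℝ = 1 → ⟪v, s⟫_ℝ = 0 := by
    by_cases ht : ∃ a ∈ S, ⟪f, a⟫_ℝ = 1
    · obtain ⟨a, ha, hfa⟩ := ht
      refine ⟨rot a, ?_, ?_⟩
      · intro h
        have h0 := congrArg (fun z : Plane => z 0) h
        have h1 := congrArg (fun z : Plane => z 1) h
        simp only [rot_zero, rot_one, PiLp.zero_apply] at h0 h1
        rw [inner_coord, h1, neg_eq_zero.mp h0] at hfa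
        norm_num at hfa
      · intro s hs hfs
        have : a = s := by
          by_contra hne
          exact hcon a ha s hs hne hfa hfs
        rw [← this, inner_coord, rot_zero, rot_one]
        ring
    · push Not at ht
      refine ⟨pt 1 0, ?_, fun s hs h => absurd h (ht s hs)⟩
      intro h
      have h0 := congrArg (fun z : Plane => z 0) h
      simp [pt] at h0
  have hev : ∀ᶠ t : ℝ in nhdsWithin 0 (Set.Ioi 0),
      ∀ s ∈ S, ⟪f, s⟫_ℝ + t * ⟪v, s⟫_ℝ ≤ 1 ∧ ⟪f, s⟫_ℝ - t * ⟪v, s⟫_ℝ ≤ 1 := by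
    rw [Filter.eventually_all_finset]
    intro s hs
    rcases (hfS s hs).lt_or_eq with hlt | heq
    · apply Filter.Eventually.filter_mono nhdsWithin_le_nhds
      have c1 : ContinuousAt (fun t : ℝ => ⟪f, s⟫_ℝ + t * ⟪v, s⟫_ℝ) 0 := by fun_prop
      have c2 : ContinuousAt (fun t : ℝ => ⟪f, s⟫_ℝ - t * ⟪v, s⟫_ℝ) 0 := by fun_prop
      have e1 := c1.eventually_lt (continuousAt_const (y := (1 : ℝ))) (by simpa using hlt)
      have e2 := c2.eventually_lt (continuousAt_const (y := (1 : ℝ))) (by simpa using hlt)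
      filter_upwards [e1, e2] with t h1 h2
      exact ⟨h1.le, h2.le⟩
    · refine Filter.Eventually.of_forall fun t => ?_
      rw [hv s hs heq, heq]
      norm_num
  obtain ⟨t, ht, htpos⟩ := (hev.and self_mem_nhdsWithin).exists
  have htpos : 0 < t := htpos
  have m1 : f + t • v ∈ polarSet S := fun s hs => by
    rw [inner_add_left, real_inner_smul_left]
    exact (ht s hs).1
  have m2 : f - t • v ∈ polarSet S := fun s hs => by
    rw [inner_sub_left, real_inner_smul_left]
    exact (ht s hs).2
  have hseg : f ∈ openSegment ℝ (f + t • v) (f - t • v) := by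
    refine ⟨1 / 2, 1 / 2, by norm_num, by norm_num, by norm_num, ?_⟩
    module
  have := hext m1 m2 hseg
  have h3 : t • v = 0 := by simpa using this
  rcases smul_eq_zero.mp h3 with h | h
  · exact htpos.ne' h
  · exact hv0 h

/-- Let `S` be a finite set of at least three points of the plane, no three pairwise
distinct points collinear, with the origin in the interior of the convex hull of `S`.  Then
the convex hull of `S` is the intersection of the closed half-planes `Hside a b`, over all
pairs of distinct `a, b ∈ S` with the origin off the line through `a` and `b` and with
`S ⊆ Hside a b`. -/
theorem convexHull_eq_iInter_halfplanes
    (S : Finset Plane) (hScard : 3 ≤ S.card)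
    (hgen : ∀ x ∈ S, ∀ y ∈ S, ∀ z ∈ S, x ≠ y → x ≠ z → y ≠ z → x ∉ line y z)
    (h0 : (0 : Plane) ∈ interior (convexHull ℝ (S : Set Plane))) :
    convexHull ℝ (S : Set Plane) =
      ⋂ (a : Plane) (_ : a ∈ S) (b : Plane) (_ : b ∈ S) (_ : a ≠ b)
        (_ : (0 : Plane) ∉ line a b) (_ : (S : Set Plane) ⊆ Hside a b), Hside a b := by
  apply Set.Subset.antisymm
  · intro x hx
    simp only [Set.mem_iInter]
    intro a _ b _ _ _ hS
    exact convexHull_min hS (convex_Hside a b) hx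
  · intro p hp
    simp only [Set.mem_iInter] at hp
    -- every extreme point of the polar is at most one at `p`
    have hextr : (polarSet S).extremePoints ℝ ⊆ {f : Plane | ⟪f, p⟫_ℝ ≤ 1} := by
      intro f hf
      obtain ⟨a, ha, b, hb, hab, hfa, hfb⟩ := exists_tight_pair hf
      have := hp a ha b hb hab (zero_notMem_line hfa hfb)
        (fun s hs => (mem_Hside_iff hab hfa hfb s).mpr (hf.1 s hs))
      exact (mem_Hside_iff hab hfa hfb p).mp this
    have hconv : Convex ℝ {f : Plane | ⟪f, p⟫_ℝ ≤ 1} := by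
      have : {f : Plane | ⟪f, p⟫_ℝ ≤ 1} = {f : Plane | ⟪p, f⟫_ℝ ≤ 1} := by
        ext f; simp only [Set.mem_ofPred_eq, real_inner_comm]
      rw [this]
      exact convex_halfSpace_le (innerSL ℝ p).isBoundedLinearMap.toIsLinearMap 1
    have hclosed : IsClosed {f : Plane | ⟪f, p⟫_ℝ ≤ 1} :=
      isClosed_le (by fun_prop) continuous_const
    have hpolar : polarSet S ⊆ {f : Plane | ⟪f, p⟫_ℝ ≤ 1} := by
      rw [← closure_convexHull_extremePoints (isCompact_polarSet h0) (convex_polarSet S)]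
      exact closure_minimal (convexHull_min hextr hconv) hclosed
    by_contra hpC
    obtain ⟨g, u, hg, hgp⟩ := geometric_hahn_banach_closed_point
      (convex_convexHull ℝ (S : Set Plane)) (S.finite_toSet.isClosed_convexHull ℝ) hpC
    have hu : 0 < u := by simpa using hg 0 (interior_subset h0)
    have hrep : ∀ x, ⟪u⁻¹ • (InnerProductSpace.toDual ℝ Plane).symm g, x⟫_ℝ = u⁻¹ * g x := by
      intro x
      rw [real_inner_smul_left, InnerProductSpace.toDual_symm_apply]
    have hmem : u⁻¹ • (InnerProductSpace.toDual ℝ Plane).symm g ∈ polarSet S := by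
      intro s hs
      rw [hrep, inv_mul_le_iff₀ hu, mul_one]
      exact (hg s (subset_convexHull ℝ _ hs)).le
    have := hpolar hmem
    rw [Set.mem_ofPred_eq, hrep, inv_mul_le_iff₀ hu, mul_one] at this
    linarith
end
end
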